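/- If an n-cbc X has a border (P,Q) with p := |P| coprime to q := |Q|, then the pair (q·[p), p·[q)) = ({0, q, 2q, …, (p−1)q}, {0, p, 2p, …, (q−1)p}) is a factorization of size n which is a border of X. -/

import Mathlib

/-!
The border condition says that `(p, x, q) ↦ p + x + q` tiles the group `(ZMod n)²`. The code
property of `X` is irrelevant beyond the two facts that a bayonet word determines its two exponents
and that `X` has `n` elements; counting then gives `|P| * |Q| = n`.

The engine is the theorem of Tijdeman and Sands (`bijective_nsmul_add`): in a tiling
`A ⊕ B = G` of a finite abelian group, `A` may be replaced with its dilate `k • A` for every `k > 0`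
coprime to `|A|`. For `k` prime it follows from the Frobenius map of the group algebra over
`ZMod k`: there `(∑ a)^k = ∑ (k • a)`, while `(∑ a) * (∑ b) = ∑ g`, so every element of `G` is
represented `|A|^(k-1) ≢ 0` times (mod `k`) by `k • A + B`, and cardinalities conclude.

Dilating `P` by `|Q|` and `Q` by `|P|` gives a tiling in which `|Q| • x` depends only on `x` modulo
`|P|`, since `|P| * |Q| = n`, and symmetrically. Hence `|Q| • [|P|)` and `|P| • [|Q|)` still cover,
and they are of the right size. They form a factorization by Bézout.
-/

namespace CBC

variable {A : Type*}

/-- `a^i` -/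
def apow (a : A) (i : ℕ) : FreeMonoid A := (FreeMonoid.of a) ^ i

/-- the bayonet word `a^i b a^j` -/
def bay (a b : A) (i j : ℕ) : FreeMonoid A := apow a i * FreeMonoid.of b * apow a j

/-- `X` is a (variable-length) code -/
def IsCode (X : Set (FreeMonoid A)) : Prop :=
  ∀ l m : List (FreeMonoid A), (∀ w ∈ l, w ∈ X) → (∀ w ∈ m, w ∈ X) →
    l.prod = m.prod → l = m

/-- `X` is a maximal code -/
def IsMaximalCode (X : Set (FreeMonoid A)) : Prop :=
  IsCode X ∧ ∀ Y : Set (FreeMonoid A), IsCode Y → X ⊆ Y → Y = X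

/-- a bayonet code : a code included in `a^* b a^*` -/
def IsBayonetCode (a b : A) (Y : Set (FreeMonoid A)) : Prop :=
  (∀ w ∈ Y, ∃ i j : ℕ, w = bay a b i j) ∧ IsCode Y

/-- an `n`-complete bayonet code -/
def IsCbc (a b : A) (n : ℕ) (X : Set (FreeMonoid A)) : Prop :=
  (∀ w ∈ X, ∃ i < n, ∃ j < n, w = bay a b i j) ∧ X.ncard = n ∧
    IsCode (insert (apow a n) X)

/-- the composition `X ∘_r Y` -/
def comp (a b : A) (n r : ℕ) (X Y : Set (FreeMonoid A)) : Set (FreeMonoid A) :=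
  { w | ∃ i j k l : ℕ, bay a b i j ∈ X ∧ bay a b k l ∈ Y ∧ (j + k) % n = r ∧
        w = bay a b i l }

/-- iterated composition `X ∘_{r₁} X₁ ∘_{r₂} ⋯ ∘_{r_k} X_k` -/
def compList (a b : A) (n : ℕ) (X : Set (FreeMonoid A))
    (rest : List (ℕ × Set (FreeMonoid A))) : Set (FreeMonoid A) :=
  rest.foldl (fun acc p => comp a b n p.1 acc p.2) X

/-- a compatible set of `n`-cbc -/
def Compatible (a b : A) (n : ℕ) (E : Set (Set (FreeMonoid A))) : Prop :=
  ∀ X ∈ E, ∀ rest : List (ℕ × Set (FreeMonoid A)),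
    (∀ p ∈ rest, p.1 < n ∧ p.2 ∈ E) → IsCbc a b n (compList a b n X rest)

/-- a stable set of `n`-cbc -/
def StableSet (a b : A) (n : ℕ) (S : Set (Set (FreeMonoid A))) : Prop :=
  (∀ X ∈ S, IsCbc a b n X) ∧ ∀ X ∈ S, ∀ Y ∈ S, ∀ r < n, comp a b n r X Y ∈ S

/-- `E^∘`, the smallest stable set containing `E` -/
def stableClosure (a b : A) (n : ℕ) (E : Set (Set (FreeMonoid A))) :
    Set (Set (FreeMonoid A)) :=
  ⋂₀ { S | StableSet a b n S ∧ E ⊆ S }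

/-- `(P,Q)` is a border of the `n`-cbc `X` : the map
`P × X × Q → (ZMod n)²`, `(p, a^i b a^j, q) ↦ (p + i, j + q)` is a bijection. -/
def IsBorder (a b : A) (n : ℕ) (P Q : Set ℤ) (X : Set (FreeMonoid A)) : Prop :=
  ∀ c : ZMod n × ZMod n, ∃! t : ℤ × (ℕ × ℕ) × ℤ,
    t.1 ∈ P ∧ bay a b t.2.1.1 t.2.1.2 ∈ X ∧ t.2.2 ∈ Q ∧
    (t.1 : ZMod n) + (t.2.1.1 : ZMod n) = c.1 ∧
    (t.2.1.2 : ZMod n) + (t.2.2 : ZMod n) = c.2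

/-- `(P,Q)` is a border of every element of `E` -/
def BordersFamily (a b : A) (n : ℕ) (P Q : Set ℤ)
    (E : Set (Set (FreeMonoid A))) : Prop :=
  ∀ X ∈ E, IsBorder a b n P Q X

def toZ (S : Set ℕ) : Set ℤ := (fun i : ℕ => (i : ℤ)) '' S

def toZModN (n : ℕ) (S : Set ℕ) : Set (ZMod n) := (fun i : ℕ => (i : ZMod n)) '' S

def toZModZ (n : ℕ) (S : Set ℤ) : Set (ZMod n) := (fun i : ℤ => (i : ZMod n)) '' S

/-- `(P,Q)` is a factorization of size `n` -/
def IsFactorization (n : ℕ) (P Q : Set (ZMod n)) : Prop :=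
  ∀ c : ZMod n, ∃! pq : ZMod n × ZMod n, pq.1 ∈ P ∧ pq.2 ∈ Q ∧ pq.1 + pq.2 = c

/-- `L_k^n(Y)` -/
def Lset (a b : A) (n : ℕ) (Y : Set (FreeMonoid A)) (k : ℕ) : Set ℕ :=
  { i | ∃ i' j' : ℕ, bay a b i' j' ∈ Y ∧ i' % n = i ∧ j' % n = k }

/-- `R_k^n(Y)` -/
def Rset (a b : A) (n : ℕ) (Y : Set (FreeMonoid A)) (k : ℕ) : Set ℕ :=
  { j | ∃ i' j' : ℕ, bay a b i' j' ∈ Y ∧ i' % n = k ∧ j' % n = j }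

/-- `L(Y)` -/
def Lfull (a b : A) (n : ℕ) (Y : Set (FreeMonoid A)) : Set ℕ :=
  { i | ∃ i' j' : ℕ, bay a b i' j' ∈ Y ∧ i' % n = i }

/-- `R(Y)` -/
def Rfam (a b : A) (n : ℕ) (Y : Set (FreeMonoid A)) : Set (Set ℕ) :=
  { R | ∃ k ∈ Lfull a b n Y, R = Rset a b n Y k }

/-- the `n`-cbc `X` borders the set `E` -/
def CbcBorders (a b : A) (n : ℕ) (X : Set (FreeMonoid A))
    (E : Set (Set (FreeMonoid A))) : Prop :=
  ∀ R ∈ Rfam a b n X,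
    IsFactorization n (toZModN n R) (toZModN n (Lfull a b n X)) ∧
    BordersFamily a b n (toZ R) (toZ (Lfull a b n X)) E

/-- `R_k^n(a^P X)` -/
def RsetShift (a b : A) (n : ℕ) (P : Set ℤ) (X : Set (FreeMonoid A)) (k : ℕ) :
    Set ℕ :=
  { j | j < n ∧ ∃ (p : ℤ) (i' j' : ℕ), p ∈ P ∧ bay a b i' j' ∈ X ∧
        ((p + (i' : ℤ) : ℤ) : ZMod n) = (k : ZMod n) ∧ j' % n = j }

/-- `L_k^n(Y a^Q)` -/
def LsetShift (a b : A) (n : ℕ) (Y : Set (FreeMonoid A)) (Q : Set ℤ) (k : ℕ) :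
    Set ℕ :=
  { i | i < n ∧ ∃ (i' j' : ℕ) (q : ℤ), q ∈ Q ∧ bay a b i' j' ∈ Y ∧
        i' % n = i ∧ (((j' : ℤ) + q : ℤ) : ZMod n) = (k : ZMod n) }

/-- `H_t(X)`, for `X ⊆ { a^i b a^j : i, j ∈ [n) }` -/
def Hfam (a b : A) (n t : ℕ) (X : Set (FreeMonoid A)) : Set (Set (FreeMonoid A)) :=
  { Y | ∃ f : ℕ → ℕ → ℕ → ℕ, (∀ i j s, f i j s < t) ∧
      Y = { w | ∃ i j s : ℕ, bay a b i j ∈ X ∧ s < t ∧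
                w = bay a b (i + f i j s * n) (j + s * n) } }

/-- `E' ∈ ℋ_t(E)` -/
def HfamSet (a b : A) (n t : ℕ) (E E' : Set (Set (FreeMonoid A))) : Prop :=
  (∀ Y ∈ E', ∃ X ∈ E, Y ∈ Hfam a b n t X) ∧
  (∀ X ∈ E, ∃ Y ∈ E', Y ∈ Hfam a b n t X)

/-- the dual `X̃` of a bayonet code -/
def dual (a b : A) (X : Set (FreeMonoid A)) : Set (FreeMonoid A) :=
  { w | ∃ i j : ℕ, bay a b i j ∈ X ∧ w = bay a b j i }

/-- a set `E` of `n`-cbc is of Hajós -/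
def IsHajos (a b : A) (n : ℕ) (E : Set (Set (FreeMonoid A))) : Prop :=
  ∃ (k : ℕ) (ts : ℕ → ℕ) (Ys : ℕ → Set (FreeMonoid A)),
    (∀ i, 1 ≤ i → i ≤ k → 1 < ts i) ∧
    (∏ i ∈ Finset.Icc 1 k, ts i) = n ∧
    Ys 0 = {FreeMonoid.of b} ∧
    (∀ i, i ≤ k - 1 → IsBayonetCode a b (Ys i)) ∧
    (∀ i, 1 ≤ i → i ≤ k - 1 →
      dual a b (Ys i) ∈ Hfam a b (∏ j ∈ Finset.Icc 1 (i - 1), ts j) (ts i) (Ys (i - 1))) ∧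
    (if k = 0 then ∀ Y ∈ E, Y = ({FreeMonoid.of b} : Set (FreeMonoid A))
     else
       (∀ Y ∈ E, Y ∈ Hfam a b (∏ j ∈ Finset.Icc 1 (k - 1), ts j) (ts k) (Ys (k - 1))) ∨
       (∀ Y ∈ E, dual a b Y ∈ Hfam a b (∏ j ∈ Finset.Icc 1 (k - 1), ts j) (ts k) (Ys (k - 1))))

/-- a Krasner factorization of size `n` -/
def IsKrasner (n : ℕ) (P Q : Set ℕ) : Prop :=
  P.Finite ∧ Q.Finite ∧ P.ncard * Q.ncard = n ∧ ∀ k < n, ∃ p ∈ P, ∃ q ∈ Q, k = p + q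

/-- `C_M(ω) = { a^{i mod n} b a^{j mod n} : a^i ω a^j ∈ M^* }` -/
def Cword (a b : A) (n : ℕ) (M : Set (FreeMonoid A)) (ω : FreeMonoid A) :
    Set (FreeMonoid A) :=
  { w | ∃ i j : ℕ, apow a i * ω * apow a j ∈ Submonoid.closure M ∧
        w = bay a b (i % n) (j % n) }

/-! ### Dilating a factor of a tiling -/

open AddMonoidAlgebra in
/-- Prime case of the Tijdeman–Sands theorem, by the Frobenius map of the group algebra over
`ZMod k`. -/
lemma bijective_prime_nsmul_add {G ι κ : Type} [AddCommGroup G] [Finite G] [Finite ι] [Finite κ]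
    (f : ι → G) (h : κ → G) (k : ℕ) (hk : k.Prime)
    (hb : Function.Bijective (fun t : ι × κ => f t.1 + h t.2))
    (hc : Nat.Coprime k (Nat.card ι)) :
    Function.Bijective (fun t : ι × κ => k • f t.1 + h t.2) := by
  classical
  have := Fintype.ofFinite G
  have := Fintype.ofFinite ι
  have := Fintype.ofFinite κ
  have : Fact k.Prime := ⟨hk⟩
  have : CharP (AddMonoidAlgebra (ZMod k) G) k :=
    charP_of_injective_algebraMap (FaithfulSMul.algebraMap_injective (ZMod k) _) k
  let e : G → AddMonoidAlgebra (ZMod k) G := fun g => single g 1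
  have he : ∀ x y, e (x + y) = e x * e y := fun x y => by simp [e, single_mul_single]
  have hepow : ∀ x, e x ^ k = e (k • x) := fun x => by simp [e, single_pow]
  have hSB : (∑ i, e (f i)) * (∑ j, e (h j)) = ∑ g, e g := by
    rw [Finset.sum_mul_sum, ← Fintype.sum_prod_type']
    simp_rw [← he]
    exact hb.sum_comp e
  have hSU : (∑ i, e (f i)) * (∑ g, e g) = (Nat.card ι : ZMod k) • ∑ g, e g := by
    rw [Finset.sum_mul]
    have : ∀ i, e (f i) * ∑ g, e g = ∑ g, e g := fun i => by
      rw [Finset.mul_sum]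
      simp_rw [← he]
      exact Fintype.sum_equiv (Equiv.addLeft (f i)) _ _ fun _ => rfl
    simp [this, Nat.cast_smul_eq_nsmul]
  have hpow : ∀ m : ℕ, (∑ i, e (f i)) ^ m * (∑ g, e g) =
      ((Nat.card ι : ZMod k) ^ m) • ∑ g, e g := by
    intro m
    induction m with
    | zero => simp
    | succ m ih => rw [pow_succ', mul_assoc, ih, mul_smul_comm, hSU, smul_smul, pow_succ]
  have hfrob : (∑ t : ι × κ, e (k • f t.1 + h t.2)) =
      ((Nat.card ι : ZMod k) ^ (k - 1)) • ∑ g, e g := by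
    rw [← hpow, ← hSB, ← mul_assoc, pow_sub_one_mul hk.ne_zero, sum_pow_char]
    simp_rw [hepow, he]
    rw [Finset.sum_mul_sum, ← Fintype.sum_prod_type']
  have hne : ((Nat.card ι : ZMod k) ^ (k - 1)) ≠ 0 := by
    apply pow_ne_zero
    rw [Ne, ZMod.natCast_eq_zero_iff]
    exact (Nat.Prime.coprime_iff_not_dvd hk).1 hc
  rw [Fintype.bijective_iff_surjective_and_card]
  refine ⟨fun g => ?_, Fintype.card_of_bijective hb⟩
  by_contra! hg
  have h1 := congrArg (fun z : AddMonoidAlgebra (ZMod k) G => z.coeff g) hfrob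
  simp [e, Finsupp.single_apply, Finset.sum_apply', hg] at h1
  exact hne (by simpa using h1.symm)

/-- The theorem of Tijdeman and Sands: in a tiling of a finite abelian group, a factor may be
dilated by any positive integer coprime to its cardinality. -/
lemma bijective_nsmul_add {G ι κ : Type} [AddCommGroup G] [Finite G] [Finite ι] [Finite κ]
    (f : ι → G) (h : κ → G) (k : ℕ) (hk : k ≠ 0)
    (hb : Function.Bijective (fun t : ι × κ => f t.1 + h t.2))
    (hc : Nat.Coprime k (Nat.card ι)) :
    Function.Bijective (fun t : ι × κ => k • f t.1 + h t.2) := by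
  induction k using induction_on_primes with
  | zero => exact absurd rfl hk
  | one => simpa using hb
  | prime_mul p k hp ih =>
    have h1 := ih (right_ne_zero_of_mul hk) hc.coprime_mul_left
    simpa only [mul_smul] using
      bijective_prime_nsmul_add (fun i => k • f i) h p hp h1 hc.coprime_mul_right

/-! ### Bayonet words and their exponents -/

lemma toList_apow (a : A) (i : ℕ) : FreeMonoid.toList (apow a i) = List.replicate i a := by
  induction i with
  | zero => rfl
  | succ i ih =>
    rw [apow, pow_succ', FreeMonoid.toList_mul, ← apow, ih]
    rfl

lemma bay_injective {a b : A} (hab : a ≠ b) {i j k l : ℕ} (h : bay a b i j = bay a b k l) :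
    i = k ∧ j = l := by
  have h1 := congrArg FreeMonoid.toList h
  simp only [bay, FreeMonoid.toList_mul, toList_apow, FreeMonoid.toList_of, List.append_assoc,
    List.singleton_append] at h1
  induction i generalizing k with
  | zero =>
    cases k with
    | zero => simpa using h1
    | succ k => simp [List.replicate_succ, hab.symm] at h1
  | succ i ih =>
    cases k with
    | zero => simp [List.replicate_succ, hab] at h1
    | succ k =>
      simp only [List.replicate_succ, List.cons_append, List.cons.injEq, true_and] at h1
      have := ih (k := k) (by
        apply FreeMonoid.toList.injective
        simpa [bay, toList_apow] using h1) h1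
      omega

/-- The exponent pairs of the words of `X`. -/
def exps (a b : A) (X : Set (FreeMonoid A)) : Set (ℕ × ℕ) := {e | bay a b e.1 e.2 ∈ X}

lemma ncard_exps {a b : A} (hab : a ≠ b) {n : ℕ} {X : Set (FreeMonoid A)} (hX : IsCbc a b n X) :
    Nat.card (exps a b X) = n := by
  rw [Nat.card_coe_set_eq, ← hX.2.1]
  refine Set.ncard_congr (fun e _ => bay a b e.1 e.2) (fun e he => he) ?_ ?_
  · intro e e' _ _ h
    exact Prod.ext (bay_injective hab h).1 (bay_injective hab h).2
  · intro w hw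
    obtain ⟨i, -, j, -, rfl⟩ := hX.1 w hw
    exact ⟨(i, j), hw, rfl⟩

/-! ### Borders as tilings of `(ZMod n)²` -/

/-- A border is a bijection from the subtype `P × exps × Q` onto `(ZMod n)²`. -/
lemma IsBorder.bijective {a b : A} {n : ℕ} {P Q : Set ℤ} {X : Set (FreeMonoid A)}
    (h : IsBorder a b n P Q X) :
    Function.Bijective (fun t : P × exps a b X × Q =>
      (((t.1.1 : ZMod n) + (t.2.1.1.1 : ZMod n), (t.2.1.1.2 : ZMod n) + (t.2.2.1 : ZMod n)) :
        ZMod n × ZMod n)) := by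
  constructor
  · rintro ⟨⟨x, hx⟩, ⟨e, he⟩, ⟨y, hy⟩⟩ ⟨⟨x', hx'⟩, ⟨e', he'⟩, ⟨y', hy'⟩⟩ heq
    have heq := Prod.ext_iff.1 heq
    have := (h _).unique (y₁ := (x, e, y)) (y₂ := (x', e', y')) ⟨hx, he, hy, heq.1, heq.2⟩
      ⟨hx', he', hy', rfl, rfl⟩
    simp only [Prod.mk.injEq] at this
    obtain ⟨rfl, rfl, rfl⟩ := this
    rfl
  · intro c
    obtain ⟨t, ⟨h1, h2, h3, h4, h5⟩, -⟩ := h c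
    exact ⟨(⟨t.1, h1⟩, ⟨t.2.1, h2⟩, ⟨t.2.2, h3⟩), Prod.ext h4 h5⟩

/-- For `x` an integer, `q * x` modulo `p * q` depends only on `x` modulo `p`. -/
lemma exists_fin_mul_eq {n p q : ℕ} (hp : p ≠ 0) (hpq : p * q = n) (x : ℤ) :
    ∃ s : Fin p, ((q : ZMod n) * (s : ℕ)) = (q : ZMod n) * (x : ZMod n) := by
  have hp' : (p : ℤ) ≠ 0 := by exact_mod_cast hp
  have h0 := Int.emod_nonneg x hp'
  have h1 := Int.emod_lt_of_pos x (by omega : (0 : ℤ) < p)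
  refine ⟨⟨(x % p).toNat, by omega⟩, ?_⟩
  have h2 : (((x % p).toNat : ℕ) : ZMod n) = ((x % p : ℤ) : ZMod n) := by
    rw [← Int.cast_natCast, Int.toNat_of_nonneg h0]
  have h3 : (q : ZMod n) * (p : ZMod n) = 0 := by
    rw [← Nat.cast_mul, mul_comm, hpq, ZMod.natCast_self]
  have h4 : (x : ZMod n) = ((x % p : ℤ) : ZMod n) + (p : ZMod n) * ((x / p : ℤ) : ZMod n) := by
    exact_mod_cast congrArg (Int.cast : ℤ → ZMod n) (Int.emod_add_mul_ediv x p).symm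
  simp only [h2]
  rw [h4, mul_add, ← mul_assoc, h3]
  ring

theorem statement6 (a b : A) (hab : a ≠ b) (n : ℕ) (hn : 1 ≤ n)
    (X : Set (FreeMonoid A)) (hX : IsCbc a b n X)
    (P Q : Set ℤ) (hP : P.Finite) (hQ : Q.Finite)
    (hPQ : IsBorder a b n P Q X)
    (hcop : Nat.Coprime P.ncard Q.ncard) :
    IsFactorization n
      (toZModZ n { x : ℤ | ∃ s : ℕ, s < P.ncard ∧ x = (Q.ncard : ℤ) * s })
      (toZModZ n { x : ℤ | ∃ s : ℕ, s < Q.ncard ∧ x = (P.ncard : ℤ) * s }) ∧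
    IsBorder a b n
      { x : ℤ | ∃ s : ℕ, s < P.ncard ∧ x = (Q.ncard : ℤ) * s }
      { x : ℤ | ∃ s : ℕ, s < Q.ncard ∧ x = (P.ncard : ℤ) * s } X := by
  classical
  have hcE := ncard_exps hab hX
  have hcP : Nat.card P = P.ncard := Nat.card_coe_set_eq P
  have hcQ : Nat.card Q = Q.ncard := Nat.card_coe_set_eq Q
  generalize P.ncard = p at *
  generalize Q.ncard = q at *
  have : NeZero n := ⟨by omega⟩
  have : Finite P := hP
  have : Finite Q := hQ
  have : Finite (exps a b X) := Nat.finite_of_card_ne_zero (by omega)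
  have hb := hPQ.bijective
  have hpq : p * q = n := by
    have h := Nat.card_eq_of_bijective _ hb
    simp only [Nat.card_prod, hcE, hcP, hcQ, Nat.card_zmod] at h
    exact Nat.eq_of_mul_eq_mul_left hn (by linarith)
  have hp : p ≠ 0 := by rintro rfl; omega
  have hq : q ≠ 0 := by rintro rfl; omega
  have h1 := bijective_nsmul_add (G := ZMod n × ZMod n) (ι := P) (κ := exps a b X × Q)
    (fun x => ((x.1 : ZMod n), 0))
    (fun t => ((t.1.1.1 : ZMod n), (t.1.1.2 : ZMod n) + (t.2.1 : ZMod n))) q hq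
    (by simpa using hb) (by rw [hcP]; exact hcop.symm)
  have h2 := bijective_nsmul_add (G := ZMod n × ZMod n) (ι := Q) (κ := P × exps a b X)
    (fun y => (0, (y.1 : ZMod n)))
    (fun t => (q * (t.1.1 : ZMod n) + (t.2.1.1 : ZMod n), (t.2.1.2 : ZMod n))) p hp
    (by
      convert h1.comp ((Equiv.prodComm Q (P × exps a b X)).trans
        (Equiv.prodAssoc P (exps a b X) Q)).bijective using 1
      funext t
      simp [add_comm]) (by rw [hcQ]; exact hcop)
  have hbij : Function.Bijective (fun t : Fin p × exps a b X × Fin q =>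
      (((q : ZMod n) * (t.1 : ℕ) + (t.2.1.1.1 : ZMod n),
        (t.2.1.1.2 : ZMod n) + (p : ZMod n) * (t.2.2 : ℕ)) : ZMod n × ZMod n)) := by
    rw [Nat.bijective_iff_surjective_and_card]
    constructor
    · intro c
      obtain ⟨⟨y, x, e⟩, rfl⟩ := h2.2 c
      obtain ⟨s, hs⟩ := exists_fin_mul_eq hp hpq x.1
      obtain ⟨t, ht⟩ := exists_fin_mul_eq hq ((mul_comm q p).trans hpq) y.1
      exact ⟨(s, e, t), by simp [hs, ht, add_comm]⟩
    · simp only [Nat.card_prod, hcE, Nat.card_zmod, Nat.card_fin]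
      rw [mul_left_comm, hpq]
  have hfac : Function.Bijective (fun t : Fin p × Fin q =>
      (q : ZMod n) * (t.1 : ℕ) + (p : ZMod n) * (t.2 : ℕ)) := by
    rw [Nat.bijective_iff_surjective_and_card]
    constructor
    · intro c
      obtain ⟨m, rfl⟩ := ZMod.intCast_surjective c
      obtain ⟨s, hs⟩ := exists_fin_mul_eq hp hpq (m * Nat.gcdB p q)
      obtain ⟨t, ht⟩ := exists_fin_mul_eq hq ((mul_comm q p).trans hpq) (m * Nat.gcdA p q)
      refine ⟨(s, t), ?_⟩
      have hbez := congrArg (Int.cast : ℤ → ZMod n) (Nat.gcd_eq_gcd_ab p q)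
      rw [hcop.gcd_eq_one] at hbez
      push_cast at hbez hs ht
      simp only [hs, ht]
      linear_combination -(m : ZMod n) * hbez
    · simp [hpq]
  constructor
  · intro c
    obtain ⟨⟨s, t⟩, rfl⟩ := hfac.2 c
    refine ⟨((q : ZMod n) * (s : ℕ), (p : ZMod n) * (t : ℕ)),
      ⟨⟨_, ⟨s, s.2, rfl⟩, by simp⟩, ⟨_, ⟨t, t.2, rfl⟩, by simp⟩, rfl⟩, ?_⟩
    rintro ⟨u, v⟩ ⟨⟨_, ⟨s', hs', rfl⟩, rfl⟩, ⟨_, ⟨t', ht', rfl⟩, rfl⟩, h⟩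
    have := @hfac.1 (⟨s', hs'⟩, ⟨t', ht'⟩) (s, t) (by simpa using h)
    simp only [Prod.mk.injEq] at this
    obtain ⟨rfl, rfl⟩ := this
    simp
  · intro c
    obtain ⟨⟨s, e, t⟩, rfl⟩ := hbij.2 c
    refine ⟨((q : ℤ) * (s : ℕ), e.1, (p : ℤ) * (t : ℕ)),
      ⟨⟨s, s.2, rfl⟩, e.2, ⟨t, t.2, rfl⟩, by simp, by simp⟩, ?_⟩
    rintro ⟨u, e', v⟩ ⟨⟨s', hs', rfl⟩, he', ⟨t', ht', rfl⟩, h3, h4⟩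
    have := @hbij.1 (⟨s', hs'⟩, ⟨e', he'⟩, ⟨t', ht'⟩) (s, e, t)
      (Prod.ext (by simpa using h3) (by simpa using h4))
    simp only [Prod.mk.injEq] at this
    obtain ⟨rfl, rfl, rfl⟩ := this
    rfl

end CBC
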